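/- Let 𝕂 be a field of characteristic zero, β a nonzero element of 𝕂, and D₀, D₁, S, M positive integers satisfying S·M > (D₀ + M)(D₁ + 1). Let (ξ₁, η₁), …, (ξ_M, η_M) be elements of 𝕂 × 𝕂* with ξ₁, …, ξ_M pairwise distinct. Then there is no nonzero polynomial P ∈ 𝕂[X, Y] of degree ≤ D₀ in X and degree ≤ D₁ in Y satisfying δ^σ P(ξ_μ, η_μ) = 0 for all 1 ≤ μ ≤ M and 0 ≤ σ < S. -/

import Mathlib

/-!
Write `P = ∑ p_j(X) Y^j`, the sum being over the `n` exponents `j` that occur in `P`, and let `W` be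
the Wronskian of the `n` terms `p_j(X) Y^j` with respect to `δ`. As `δ` acts on `p(X) Y^j` through
`d/dX + β j` on `p`, the power of `Y` in each column factors out: `W = Δ(X) Y^(∑ j)`, and `Δ` has
degree at most `∑ deg p_j`. The coefficient of `Δ` in that degree is the product of the leading
coefficients of the `p_j` and the Vandermonde determinant of the distinct numbers `β j`, hence is
nonzero.

The polynomials vanishing to order `m` along `δ` at a point form an ideal, and `δ` lowers the order
by at most one. The rows of the Wronskian matrix add up to `P, δ P, …, δ^(n-1) P`, so by Cramer's
rule `W` vanishes to order `S - n + 1` at every `(ξ_μ, η_μ)`. As `η_μ ≠ 0`, so does `Δ`, i.e. each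
`ξ_μ` is a root of `Δ` of multiplicity at least `S - n + 1`. Counting roots,
`M (S - n + 1) ≤ ∑ deg p_j ≤ n D₀`, while `n ≤ D₁ + 1`.
-/

open MvPolynomial

/-- The derivation `δ = ∂/∂X + β Y ∂/∂Y` on `𝕂[X, Y]`, where `X` is the variable `0`
and `Y` is the variable `1`. -/
noncomputable def deltaOp {𝕂 : Type*} [CommRing 𝕂] (β : 𝕂)
    (P : MvPolynomial (Fin 2) 𝕂) : MvPolynomial (Fin 2) 𝕂 :=
  pderiv 0 P + C β * X 1 * pderiv 1 P

open Finset
open scoped Polynomial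

section DifferentialPower

variable {R A : Type*} [CommSemiring R] [CommRing A] [Algebra R A]
  {D : Derivation R A A} {I : Ideal A} {m : ℕ} {a b : A}

lemma iterate_derivation_mul_mem {σ : ℕ} (a : A) (hb : ∀ τ ≤ σ, D^[τ] b ∈ I) :
    D^[σ] (a * b) ∈ I := by
  induction σ generalizing a b with
  | zero => exact I.mul_mem_left a (hb 0 le_rfl)
  | succ σ ih =>
    rw [Function.iterate_succ_apply, D.leibniz, iterate_map_add, smul_eq_mul, smul_eq_mul,
      mul_comm b]
    exact I.add_mem (ih a fun τ hτ => hb (τ + 1) (by lia)) (ih (D a) fun τ hτ => hb τ (by lia))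

/-- The `m`-th differential power of an ideal `I` with respect to a derivation `D`. For the ideal
of a point, it consists of the functions vanishing to order at least `m` along `D` there. -/
def differentialPower (D : Derivation R A A) (I : Ideal A) (m : ℕ) : Ideal A where
  carrier := {a | ∀ σ < m, D^[σ] a ∈ I}
  add_mem' ha hb σ hσ := by
    rw [iterate_map_add]
    exact I.add_mem (ha σ hσ) (hb σ hσ)
  zero_mem' σ _ := by simp [iterate_map_zero]
  smul_mem' a _ hb _ hσ := iterate_derivation_mul_mem a fun τ hτ => hb τ (hτ.trans_lt hσ)

lemma mem_differentialPower : a ∈ differentialPower D I m ↔ ∀ σ < m, D^[σ] a ∈ I := Iff.rfl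

lemma mem_differentialPower_succ :
    a ∈ differentialPower D I (m + 1) ↔ a ∈ I ∧ D a ∈ differentialPower D I m := by
  simp only [mem_differentialPower, Nat.forall_lt_succ_left, Function.iterate_zero_apply,
    Function.iterate_succ_apply]

lemma iterate_mem_differentialPower {S i : ℕ} (ha : a ∈ differentialPower D I S)
    (h : m + i ≤ S) : D^[i] a ∈ differentialPower D I m := fun σ hσ => by
  rw [← Function.iterate_add_apply]
  exact ha _ (by lia)

lemma mem_differentialPower_of_mul_mem [I.IsPrime] (ha : a ∉ I)
    (hab : a * b ∈ differentialPower D I m) : b ∈ differentialPower D I m := by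
  induction m generalizing b with
  | zero => exact fun σ hσ => absurd hσ σ.not_lt_zero
  | succ m ih =>
    have hb : b ∈ differentialPower D I m :=
      ih (iterate_mem_differentialPower (i := 0) hab m.le_succ)
    obtain ⟨hab, hD⟩ := mem_differentialPower_succ.1 hab
    rw [D.leibniz, smul_eq_mul, smul_eq_mul] at hD
    exact mem_differentialPower_succ.2 ⟨(Ideal.IsPrime.mem_or_mem ‹_› hab).resolve_left ha,
      ih ((Ideal.add_mem_iff_left _ (Ideal.mul_mem_right _ _ hb)).1 hD)⟩

end DifferentialPower

section Wronskian

lemma det_mem_of_sum_row_mem {A κ : Type*} [CommRing A] [Fintype κ] [DecidableEq κ] [Nonempty κ]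
    {N : Matrix κ κ A} {I : Ideal A} (h : ∀ i, ∑ k, N i k ∈ I) : N.det ∈ I := by
  obtain ⟨l⟩ := ‹Nonempty κ›
  have hcramer : ∑ i, N.adjugate l i * ∑ k, N i k = N.det := by
    calc ∑ i, N.adjugate l i * ∑ k, N i k = ∑ k, (N.adjugate * N) l k := by
          simp only [Matrix.mul_apply, mul_sum]
          exact sum_comm
      _ = N.det := by simp [Matrix.adjugate_mul, Matrix.one_apply]
  exact hcramer ▸ I.sum_mem fun i _ => I.mul_mem_left _ (h i)

variable {R A : Type*} [CommSemiring R] [CommRing A] [Algebra R A] {n : ℕ}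

/-- The Wronskian of a family of `n` elements with respect to a derivation, whose `i`-th iterate
fills the `i`-th row. -/
def wronskian (D : Derivation R A A) (f : Fin n → A) : A :=
  (Matrix.of fun i k : Fin n => D^[i] (f k)).det

lemma wronskian_mem_differentialPower [NeZero n] {D : Derivation R A A} {I : Ideal A}
    {f : Fin n → A} {m S : ℕ} (hf : ∑ k, f k ∈ differentialPower D I S) (hm : m + n ≤ S + 1) :
    wronskian D f ∈ differentialPower D I m := by
  refine det_mem_of_sum_row_mem fun i => ?_
  have hrow : ∑ k, D^[i] (f k) = D^[i] (∑ k, f k) := by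
    simpa only [Module.End.pow_apply, Derivation.coeFn_coe] using
      (map_sum ((D : A →ₗ[R] A) ^ (i : ℕ)) f univ).symm
  simpa only [Matrix.of_apply, hrow] using iterate_mem_differentialPower hf (by lia)

end Wronskian

section PolynomialDegree

lemma coeff_prod_sum_of_natDegree_le {R ι : Type*} [CommSemiring R]
    {s : Finset ι} {f : ι → R[X]} {d : ι → ℕ}
    (h : ∀ i ∈ s, (f i).natDegree ≤ d i) :
    (∏ i ∈ s, f i).coeff (∑ i ∈ s, d i) = ∏ i ∈ s, (f i).coeff (d i) := by
  induction s using Finset.cons_induction with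
  | empty => simp
  | cons a s ha ih =>
    rw [Finset.forall_mem_cons] at h
    rw [prod_cons, sum_cons, prod_cons, ← ih h.2]
    exact Polynomial.coeff_mul_add_eq_of_natDegree_le h.1
      ((Polynomial.natDegree_prod_le _ _).trans (sum_le_sum h.2))

variable {R ι : Type*} [CommRing R]

section Det

variable [Fintype ι] [DecidableEq ι] {N : Matrix ι ι R[X]} {d : ι → ℕ}

lemma natDegree_det_le (h : ∀ i k, (N i k).natDegree ≤ d k) : N.det.natDegree ≤ ∑ k, d k := by
  rw [Matrix.det_apply]
  exact Polynomial.natDegree_sum_le_of_forall_le _ _ fun g _ =>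
    (Polynomial.natDegree_smul_le _ _).trans <|
      (Polynomial.natDegree_prod_le _ _).trans (sum_le_sum fun k _ => h (g k) k)

lemma coeff_det_of_natDegree_le (h : ∀ i k, (N i k).natDegree ≤ d k) :
    N.det.coeff (∑ k, d k) = (Matrix.of fun i k => (N i k).coeff (d k)).det := by
  simp only [Matrix.det_apply, Polynomial.finsetSum_coeff, Polynomial.coeff_smul,
    coeff_prod_sum_of_natDegree_le fun k _ => h _ k, Matrix.of_apply]

end Det

lemma card_mul_le_natDegree_of_le_rootMultiplicity [IsDomain R] [Fintype ι] {ξ : ι → R}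
    (hξ : Function.Injective ξ) {q : R[X]} {m : ℕ} (h : ∀ i, m ≤ q.rootMultiplicity (ξ i)) :
    Fintype.card ι * m ≤ q.natDegree := by
  classical
  calc Fintype.card ι * m = ∑ _i : ι, m := by simp
    _ ≤ ∑ i, q.roots.count (ξ i) := sum_le_sum fun i _ => by simpa using h i
    _ = ∑ a ∈ univ.image ξ, q.roots.count a := by
      rw [sum_image hξ.injOn]
    _ ≤ ∑ a ∈ univ.image ξ ∪ q.roots.toFinset, q.roots.count a :=
      sum_le_sum_of_subset subset_union_left
    _ = q.roots.card := Multiset.sum_count_eq_card fun a ha => by simp_all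
    _ ≤ q.natDegree := q.card_roots'

end PolynomialDegree

section TwistedDerivative

variable {R : Type*} [CommRing R]

/-- The operator `d/dX + c`, conjugate to `d/dX` under multiplication by `exp (c X)`. -/
noncomputable def twistedDerivative (c : R) (q : R[X]) : R[X] :=
  Polynomial.derivative q + Polynomial.C c * q

lemma natDegree_iterate_twistedDerivative_le (c : R) (q : R[X]) (i : ℕ) :
    ((twistedDerivative c)^[i] q).natDegree ≤ q.natDegree := by
  induction i with
  | zero => rfl
  | succ i ih =>
    rw [Function.iterate_succ_apply']
    exact (Polynomial.natDegree_add_le_of_degree_le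
      ((Polynomial.natDegree_derivative_le _).trans (Nat.sub_le _ _))
      (Polynomial.natDegree_C_mul_le _ _)).trans ih

lemma coeff_natDegree_iterate_twistedDerivative (c : R) (q : R[X]) (i : ℕ) :
    ((twistedDerivative c)^[i] q).coeff q.natDegree = c ^ i * q.leadingCoeff := by
  induction i with
  | zero => simp
  | succ i ih =>
    have htop : ((twistedDerivative c)^[i] q).coeff (q.natDegree + 1) = 0 :=
      Polynomial.coeff_eq_zero_of_natDegree_lt <|
        Nat.lt_succ_of_le (natDegree_iterate_twistedDerivative_le c q i)
    rw [Function.iterate_succ_apply', twistedDerivative, Polynomial.coeff_add,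
      Polynomial.coeff_derivative, htop, Polynomial.coeff_C_mul, ih]
    ring

/-- The determinant with entries `(d/dX + c_k)^i p_k`, where `i` is the row index. It is the
Wronskian of the functions `p_k(X) exp (c_k X)` without its exponential factor. -/
noncomputable def twistedWronskian {n : ℕ} (c : Fin n → R) (p : Fin n → R[X]) : R[X] :=
  (Matrix.of fun i k : Fin n => (twistedDerivative (c k))^[i] (p k)).det

variable {n : ℕ}

lemma natDegree_twistedWronskian_le (c : Fin n → R) (p : Fin n → R[X]) :
    (twistedWronskian c p).natDegree ≤ ∑ k, (p k).natDegree :=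
  natDegree_det_le fun i k => natDegree_iterate_twistedDerivative_le (c k) (p k) i

lemma coeff_twistedWronskian (c : Fin n → R) (p : Fin n → R[X]) :
    (twistedWronskian c p).coeff (∑ k, (p k).natDegree) =
      (∏ k, (p k).leadingCoeff) * (Matrix.vandermonde c).det := by
  rw [twistedWronskian, coeff_det_of_natDegree_le, ← (Matrix.vandermonde c).det_transpose,
    ← Matrix.det_mul_row]
  · congr 1
    ext i k
    exact (coeff_natDegree_iterate_twistedDerivative (c k) (p k) i).trans (mul_comm _ _)
  · exact fun i k => natDegree_iterate_twistedDerivative_le (c k) (p k) i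

lemma twistedWronskian_ne_zero [IsDomain R] {c : Fin n → R} (hc : Function.Injective c)
    {p : Fin n → R[X]} (hp : ∀ k, p k ≠ 0) : twistedWronskian c p ≠ 0 := by
  have hcoeff : (twistedWronskian c p).coeff (∑ k, (p k).natDegree) ≠ 0 := by
    rw [coeff_twistedWronskian]
    exact mul_ne_zero (prod_ne_zero_iff.2 fun k _ => Polynomial.leadingCoeff_ne_zero.2 (hp k))
      (Matrix.det_vandermonde_ne_zero_iff.2 hc)
  exact fun h => hcoeff (by rw [h, Polynomial.coeff_zero])

end TwistedDerivative

section Delta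

variable {R : Type*} [CommRing R] (β : R)

/-- `deltaOp` as a bundled derivation, to which the product rule and `differentialPower` apply. -/
noncomputable def delta : Derivation R (MvPolynomial (Fin 2) R) (MvPolynomial (Fin 2) R) :=
  pderiv 0 + (C β * X 1 : MvPolynomial (Fin 2) R) • pderiv 1

lemma delta_X_zero : delta β (X 0) = 1 := by
  simp [delta]

lemma delta_X_one : delta β (X 1) = C β * X 1 := by
  simp [delta]

lemma delta_toMvPolynomial (q : R[X]) :
    delta β (q.toMvPolynomial 0) = (Polynomial.derivative q).toMvPolynomial 0 := by
  rw [Polynomial.toMvPolynomial, Derivation.map_aeval, delta_X_zero, smul_eq_mul, mul_one]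

lemma delta_X_one_pow (j : ℕ) : delta β (X 1 ^ j) = C (β * j) * X 1 ^ j := by
  induction j with
  | zero => simp
  | succ j ih =>
    rw [pow_succ, Derivation.leibniz, ih, delta_X_one]
    simp only [smul_eq_mul, map_mul, map_natCast, map_add, map_one, Nat.cast_add, Nat.cast_one]
    ring

lemma delta_toMvPolynomial_mul_X_one_pow (q : R[X]) (j : ℕ) :
    delta β (q.toMvPolynomial 0 * X 1 ^ j) =
      (twistedDerivative (β * j) q).toMvPolynomial 0 * X 1 ^ j := by
  rw [Derivation.leibniz, delta_toMvPolynomial, delta_X_one_pow, twistedDerivative, map_add,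
    map_mul (Polynomial.toMvPolynomial 0), Polynomial.toMvPolynomial_C, smul_eq_mul, smul_eq_mul]
  ring

lemma wronskian_delta {n : ℕ} (p : Fin n → R[X]) (e : Fin n → ℕ) :
    wronskian (delta β) (fun k => (p k).toMvPolynomial 0 * X 1 ^ e k) =
      X 1 ^ (∑ k, e k) * (twistedWronskian (fun k => β * e k) p).toMvPolynomial 0 := by
  rw [← prod_pow_eq_pow_sum, twistedWronskian, AlgHom.map_det, ← Matrix.det_mul_row, wronskian]
  congr 1
  ext1 i k
  have hsemiconj : Function.Semiconj (fun q : R[X] => q.toMvPolynomial 0 * X 1 ^ e k)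
      (twistedDerivative (β * e k)) (delta β) :=
    fun q => (delta_toMvPolynomial_mul_X_one_pow β q (e k)).symm
  exact ((hsemiconj.iterate_right i).eq (p k)).symm.trans (mul_comm _ _)

variable {β}

lemma le_rootMultiplicity_of_toMvPolynomial_mem [IsDomain R] [CharZero R] {x : Fin 2 → R}
    {m : ℕ} {q : R[X]} (hq : q ≠ 0)
    (h : q.toMvPolynomial 0 ∈ differentialPower (delta β) (RingHom.ker (eval x)) m) :
    m ≤ q.rootMultiplicity (x 0) := by
  cases m with
  | zero => exact Nat.zero_le _
  | succ m =>
    refine Polynomial.lt_rootMultiplicity_of_isRoot_iterate_derivative hq fun σ hσ => ?_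
    have hsemiconj : Function.Semiconj (Polynomial.toMvPolynomial (R := R) (0 : Fin 2))
        Polynomial.derivative (delta β) := fun q => (delta_toMvPolynomial β q).symm
    have hσ' := h σ (Nat.lt_succ_of_le hσ)
    rwa [← (hsemiconj.iterate_right σ).eq q, RingHom.mem_ker, eval_toMvPolynomial] at hσ'

end Delta

section ExpansionInY

lemma card_image_support_le_degreeOf_add_one {R σ : Type*} [CommSemiring R]
    (P : MvPolynomial σ R) (i : σ) :
    #(P.support.image fun m => m i) ≤ degreeOf i P + 1 := by
  refine (card_le_card (t := range (degreeOf i P + 1)) ?_).trans_eq (card_range _)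
  simpa only [image_subset_iff, mem_range_succ_iff] using fun m hm => monomial_le_degreeOf i hm

open Polynomial.Bivariate

variable {R : Type*} [CommRing R]

lemma coeff_equivMvPolynomial (Q : R[X][Y]) (m : Fin 2 →₀ ℕ) :
    coeff m (equivMvPolynomial R Q) = (Q.coeff (m 1)).coeff (m 0) := by
  have hm (i j : ℕ) : (Finsupp.single 0 i + Finsupp.single 1 j = m) ↔ (j = m 1 ∧ i = m 0) := by
    simp [Finsupp.ext_iff, Fin.forall_fin_two, and_comm]
  induction Q using Polynomial.induction_on' with
  | add P Q hP hQ => simp [hP, hQ]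
  | monomial j q =>
    induction q using Polynomial.induction_on' with
    | add p q hp hq => simp_all
    | monomial i a =>
      have hmonomial : equivMvPolynomial R (.monomial j (.monomial i a)) =
          monomial (Finsupp.single 0 i + Finsupp.single 1 j) a := by
        simp [← Polynomial.C_mul_X_pow_eq_monomial, X_pow_eq_monomial, C_mul_monomial]
      rw [hmonomial, coeff_monomial, Polynomial.coeff_monomial]
      by_cases hj : j = m 1 <;> simp [hm, hj, Polynomial.coeff_monomial]

lemma equivMvPolynomial_eq_sum (Q : R[X][Y]) :
    equivMvPolynomial R Q = ∑ j ∈ Q.support, (Q.coeff j).toMvPolynomial 0 * X 1 ^ j := by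
  have hC (q : R[X]) : equivMvPolynomial R (.C q) = q.toMvPolynomial 0 := by
    simpa [equivMvPolynomial, Polynomial.toMvPolynomial] using
      Polynomial.eval_map_algebraMap q (X 0 : MvPolynomial (Fin 2) R)
  conv_lhs => rw [Q.as_sum_support_C_mul_X_pow]
  simp only [map_sum, map_mul, map_pow, hC, equivMvPolynomial_X]

lemma support_equivMvPolynomial_symm (P : MvPolynomial (Fin 2) R) :
    ((equivMvPolynomial R).symm P).support = P.support.image fun m => m 1 := by
  obtain ⟨Q, rfl⟩ := (equivMvPolynomial R).surjective P
  ext j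
  simp only [AlgEquiv.symm_apply_apply, mem_image, mem_support_iff, coeff_equivMvPolynomial,
    Polynomial.mem_support_iff]
  constructor
  · intro hj
    exact ⟨Finsupp.single 0 (Q.coeff j).natDegree + Finsupp.single 1 j, by simpa using hj, by simp⟩
  · rintro ⟨m, hm, rfl⟩ hj
    exact hm (by rw [hj, Polynomial.coeff_zero])

lemma natDegree_coeff_equivMvPolynomial_symm_le (P : MvPolynomial (Fin 2) R) (j : ℕ) :
    (((equivMvPolynomial R).symm P).coeff j).natDegree ≤ degreeOf 0 P := by
  obtain ⟨Q, rfl⟩ := (equivMvPolynomial R).surjective P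
  rw [AlgEquiv.symm_apply_apply]
  rcases eq_or_ne (Q.coeff j) 0 with hj | hj
  · simp [hj]
  · have hmem : Finsupp.single 0 (Q.coeff j).natDegree + Finsupp.single 1 j ∈
        (equivMvPolynomial R Q).support := by
      simpa [coeff_equivMvPolynomial] using hj
    simpa using monomial_le_degreeOf 0 hmem

lemma exists_eq_sum_toMvPolynomial_mul_X_one_pow (P : MvPolynomial (Fin 2) R) :
    ∃ (p : Fin #(P.support.image fun m => m 1) → R[X])
      (e : Fin #(P.support.image fun m => m 1) ↪ ℕ),
      (∀ k, p k ≠ 0) ∧ (∀ k, (p k).natDegree ≤ degreeOf 0 P) ∧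
        P = ∑ k, (p k).toMvPolynomial 0 * X 1 ^ e k := by
  set s := P.support.image fun m => m 1
  set Q := (equivMvPolynomial R).symm P
  have hsupp : Q.support = s := support_equivMvPolynomial_symm P
  let e := (s.orderEmbOfFin rfl).toEmbedding
  refine ⟨fun k => Q.coeff (e k), e, fun k => ?_,
    fun k => natDegree_coeff_equivMvPolynomial_symm_le P (e k), ?_⟩
  · rw [← Polynomial.mem_support_iff, hsupp]
    exact s.orderEmbOfFin_mem rfl k
  · rw [← sum_map univ e fun j => (Q.coeff j).toMvPolynomial 0 * X 1 ^ j,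
      map_orderEmbOfFin_univ, ← hsupp, ← equivMvPolynomial_eq_sum, AlgEquiv.apply_symm_apply]

end ExpansionInY

section Estimate

variable {R ι : Type*} [CommRing R] [IsDomain R] [CharZero R] [Fintype ι] {β : R}
  {x : ι → Fin 2 → R} {S : ℕ}

lemma card_mul_le_sum_natDegree (hβ : β ≠ 0) (hx₀ : Function.Injective fun i => x i 0)
    (hx₁ : ∀ i, x i 1 ≠ 0) {n m : ℕ} [NeZero n] (hm : m + n ≤ S + 1) {p : Fin n → R[X]}
    (hp : ∀ k, p k ≠ 0) {e : Fin n → ℕ} (he : Function.Injective e)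
    (hvan : ∀ i, ∑ k, (p k).toMvPolynomial 0 * X 1 ^ e k ∈
      differentialPower (delta β) (RingHom.ker (eval (x i))) S) :
    Fintype.card ι * m ≤ ∑ k, (p k).natDegree := by
  have hc : Function.Injective fun k => β * (e k : R) :=
    (mul_right_injective₀ hβ).comp (Nat.cast_injective.comp he)
  have hmult (i : ι) :
      m ≤ (twistedWronskian (fun k => β * e k) p).rootMultiplicity (x i 0) := by
    have hW := wronskian_mem_differentialPower (hvan i) hm
    rw [wronskian_delta] at hW
    have hprime : (RingHom.ker (eval (x i))).IsPrime := RingHom.ker_isPrime _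
    have hY : X 1 ^ (∑ k, e k) ∉ RingHom.ker (eval (x i)) := by
      simp [RingHom.mem_ker, hx₁ i]
    exact le_rootMultiplicity_of_toMvPolynomial_mem (twistedWronskian_ne_zero hc hp)
      (mem_differentialPower_of_mul_mem hY hW)
  exact (card_mul_le_natDegree_of_le_rootMultiplicity hx₀ hmult).trans
    (natDegree_twistedWronskian_le _ p)

theorem multiplicity_estimate_general (hβ : β ≠ 0) (hx₀ : Function.Injective fun i => x i 0)
    (hx₁ : ∀ i, x i 1 ≠ 0) {P : MvPolynomial (Fin 2) R} (hP : P ≠ 0)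
    (hvan : ∀ i, ∀ σ < S, eval (x i) ((deltaOp β)^[σ] P) = 0) :
    S * Fintype.card ι ≤
      (degreeOf 0 P + Fintype.card ι) * #(P.support.image fun m => m 1) := by
  have : NeZero #(P.support.image fun m => m 1) := ⟨by simpa using hP⟩
  obtain ⟨p, e, hp, hdeg, hsum⟩ := exists_eq_sum_toMvPolynomial_mul_X_one_pow P
  generalize #(P.support.image fun m => m 1) = n at *
  replace hvan (i : ι) : P ∈ differentialPower (delta β) (RingHom.ker (eval (x i))) S := hvan i
  rw [hsum] at hvan
  have hcount : Fintype.card ι * (S + 1 - n) ≤ n * degreeOf 0 P := by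
    rcases le_or_gt n S with hn | hn
    · calc Fintype.card ι * (S + 1 - n) ≤ ∑ k, (p k).natDegree :=
            card_mul_le_sum_natDegree hβ hx₀ hx₁ (by lia) hp e.injective hvan
        _ ≤ ∑ _k : Fin n, degreeOf 0 P := sum_le_sum fun k _ => hdeg k
        _ = n * degreeOf 0 P := by simp
    · simp [Nat.sub_eq_zero_of_le hn]
  have hS : S ≤ (S + 1 - n) + n := by lia
  nlinarith [Nat.mul_le_mul_right (Fintype.card ι) hS]

end Estimate

/-- **Lemma 2 (multiplicity estimate).** Let `𝕂` be a field of characteristic zero,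
`β ∈ 𝕂` nonzero, and `D₀, D₁, S, M` positive integers with `S M > (D₀ + M)(D₁ + 1)`.
Let `(ξ₁, η₁), …, (ξ_M, η_M) ∈ 𝕂 × 𝕂*` with the `ξ_μ` pairwise distinct. Then no nonzero
`P ∈ 𝕂[X, Y]` with `deg_X P ≤ D₀` and `deg_Y P ≤ D₁` satisfies
`δ^σ P(ξ_μ, η_μ) = 0` for all `1 ≤ μ ≤ M` and `0 ≤ σ < S`. -/
theorem multiplicity_estimate {𝕂 : Type*} [Field 𝕂] [CharZero 𝕂]
    (β : 𝕂) (hβ : β ≠ 0) (D₀ D₁ S M : ℕ)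
    (hD₀ : 0 < D₀) (hD₁ : 0 < D₁) (hS : 0 < S) (hM : 0 < M)
    (hcond : (D₀ + M) * (D₁ + 1) < S * M)
    (ξ η : Fin M → 𝕂) (hη : ∀ μ, η μ ≠ 0) (hξ : Function.Injective ξ) :
    ¬ ∃ P : MvPolynomial (Fin 2) 𝕂, P ≠ 0 ∧
      degreeOf 0 P ≤ D₀ ∧ degreeOf 1 P ≤ D₁ ∧
      ∀ (μ : Fin M) (σ : ℕ), σ < S →
        eval (fun i => if i = 0 then ξ μ else η μ) ((deltaOp β)^[σ] P) = 0 := by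
  rintro ⟨P, hP, h₀, h₁, hvan⟩
  have hS := multiplicity_estimate_general hβ hξ hη hP hvan
  rw [Fintype.card_fin] at hS
  exact hcond.not_ge (hS.trans (Nat.mul_le_mul (Nat.add_le_add_right h₀ M)
    ((card_image_support_le_degreeOf_add_one P 1).trans (Nat.succ_le_succ h₁))))
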